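/- Second-moment tensor structure (part of Theorem 1): under the multi-view latent class model with full-column-rank conditional mean matrices θ₁,θ₂,θ₃ and positive class probabilities p₁,…,p_L, the transformed variable R²′ := E[R¹⊗R³]·E[R²⊗R³]⁺·R² satisfies E[R²′ | z=i] = θ_{1,i}, and consequently M₂ := E[R¹ ⊗ R²′] = ∑_{i=1}^L p_i θ_{1,i} ⊗ θ_{1,i}. -/

import Mathlib

open MeasureTheory

/-- A matrix over a field with linearly independent columns has a left inverse. -/
theorem exists_mul_eq_one_of_linearIndependent_transpose {K m n : Type*} [Field K] [Fintype m]
    [Fintype n] [DecidableEq n] {A : Matrix m n K} (hA : LinearIndependent K A.transpose) :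
    ∃ B : Matrix n m K, B * A = 1 := by
  classical
  obtain ⟨g, hg⟩ := LinearMap.exists_leftInverse_of_injective (Matrix.toLin' A)
    (LinearMap.ker_eq_bot.mpr (Matrix.mulVec_injective_iff.mpr hA))
  refine ⟨LinearMap.toMatrix' g, ?_⟩
  rw [← LinearMap.toMatrix'_toLin' A, ← LinearMap.toMatrix'_comp, hg, LinearMap.toMatrix'_id]

/-- If `B` has a left inverse and `C` has a right inverse, then `C` times any generalized inverse
of `B * C` is a left inverse of `B`. -/
theorem mul_generalizedInverse_mul_eq_one {K m n k : Type*} [Ring K] [Fintype m] [Fintype n]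
    [Fintype k] [DecidableEq n] {B : Matrix m n K} {C : Matrix n k K} {P : Matrix k m K}
    {B' : Matrix n m K} {C' : Matrix k n K} (hB : B' * B = 1) (hC : C * C' = 1)
    (hP : B * C * P * (B * C) = B * C) : C * P * B = 1 := by
  calc C * P * B = (B' * B) * C * P * B * (C * C') := by simp [hB, hC]
    _ = B' * (B * C * P * (B * C)) * C' := by simp only [Matrix.mul_assoc]
    _ = (B' * B) * (C * C') := by rw [hP]; simp only [Matrix.mul_assoc]
    _ = 1 := by simp [hB, hC]

/-- The integral of a function is the sum of its integrals over the fibres of a map to a finite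
type. -/
theorem integral_eq_sum_setIntegral_fiber {Ω ι : Type*} [MeasurableSpace Ω] [Fintype ι]
    [MeasurableSpace ι] [MeasurableSingletonClass ι] {μ : Measure Ω} {z : Ω → ι}
    (hz : Measurable z) {f : Ω → ℝ} (hf : Integrable f μ) :
    ∫ ω, f ω ∂μ = ∑ i, ∫ ω in {ω | z ω = i}, f ω ∂μ := by
  have hcover : ⋃ i, {ω | z ω = i} = Set.univ := Set.iUnion_eq_univ_iff.mpr fun ω => ⟨z ω, rfl⟩
  rw [← setIntegral_univ, ← hcover]
  refine integral_iUnion_fintype (fun i => hz (measurableSet_singleton i)) (fun i j hij => ?_)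
    fun i => hf.integrableOn
  exact Set.disjoint_left.mpr fun ω hi hj => hij (Eq.trans (Eq.symm hi) hj)

/-- The mixed moment of two variables that are uncorrelated given a finite class variable. -/
theorem integral_mul_eq_sum_of_class_means {Ω ι : Type*} [MeasurableSpace Ω] [Fintype ι]
    [MeasurableSpace ι] [MeasurableSingletonClass ι] {μ : Measure Ω} {z : Ω → ι}
    (hz : Measurable z) {X Y : Ω → ℝ} (hXY : Integrable (fun ω => X ω * Y ω) μ)
    {p x y : ι → ℝ} (hp : ∀ i, p i ≠ 0)
    (hx : ∀ i, (∫ ω in {ω | z ω = i}, X ω ∂μ) = p i * x i)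
    (hy : ∀ i, (∫ ω in {ω | z ω = i}, Y ω ∂μ) = p i * y i)
    (hCI : ∀ i, p i * (∫ ω in {ω | z ω = i}, X ω * Y ω ∂μ) =
      (∫ ω in {ω | z ω = i}, X ω ∂μ) * (∫ ω in {ω | z ω = i}, Y ω ∂μ)) :
    (∫ ω, X ω * Y ω ∂μ) = ∑ i, p i * x i * y i := by
  rw [integral_eq_sum_setIntegral_fiber hz hXY]
  refine Finset.sum_congr rfl fun i _ => mul_left_cancel₀ (hp i) ?_
  rw [hCI, hx, hy]
  ring

/-- Second-moment tensor structure (part of Theorem 1): under the multi-view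
latent class model with full-column-rank conditional mean matrices
`θ₁, θ₂, θ₃` and positive class probabilities `p₁,…,p_L`, the transformed
variable `R²′ := E[R¹⊗R³] · E[R²⊗R³]⁺ · R²` satisfies
`E[R²′ | z = i] = θ_{1,i}` (equivalently, `∫_{z=i} R²′ = pᵢ θ_{1,i}`), and
consequently `M₂ := E[R¹ ⊗ R²′] = ∑ᵢ pᵢ θ_{1,i} ⊗ θ_{1,i}`.
The Moore–Penrose pseudoinverse `Pinv` of `A23 = E[R²⊗R³]` is characterized by
the four Penrose conditions. -/
theorem second_moment_tensor_structure {Ω : Type*} [MeasurableSpace Ω]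
    (μ : Measure Ω) [IsProbabilityMeasure μ]
    (L J1 J2 J3 : ℕ) (z : Ω → Fin L) (hz : Measurable z)
    (R1 : Ω → Fin J1 → ℝ) (R2 : Ω → Fin J2 → ℝ) (R3 : Ω → Fin J3 → ℝ)
    (p : Fin L → ℝ) (hppos : ∀ i, 0 < p i)
    (θ1 : Matrix (Fin J1) (Fin L) ℝ) (θ2 : Matrix (Fin J2) (Fin L) ℝ)
    (θ3 : Matrix (Fin J3) (Fin L) ℝ)
    -- full column rank of each θ_t (linearly independent columns):
    (hrank1 : LinearIndependent ℝ θ1.transpose)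
    (hrank2 : LinearIndependent ℝ θ2.transpose)
    (hrank3 : LinearIndependent ℝ θ3.transpose)
    -- integrability:
    (hint1 : ∀ a, Integrable (fun ω => R1 ω a) μ)
    (hint2 : ∀ b, Integrable (fun ω => R2 ω b) μ)
    (hint3 : ∀ c, Integrable (fun ω => R3 ω c) μ)
    (hint12 : ∀ a b, Integrable (fun ω => R1 ω a * R2 ω b) μ)
    (hint13 : ∀ a c, Integrable (fun ω => R1 ω a * R3 ω c) μ)
    (hint23 : ∀ b c, Integrable (fun ω => R2 ω b * R3 ω c) μ)
    -- class probabilities and conditional means: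
    (hp : ∀ i, (μ {ω | z ω = i}).toReal = p i)
    (hmean1 : ∀ i a, (∫ ω in {ω | z ω = i}, R1 ω a ∂μ) = p i * θ1 a i)
    (hmean2 : ∀ i b, (∫ ω in {ω | z ω = i}, R2 ω b ∂μ) = p i * θ2 b i)
    (hmean3 : ∀ i c, (∫ ω in {ω | z ω = i}, R3 ω c ∂μ) = p i * θ3 c i)
    -- pairwise conditional independence given z:
    (hCI12 : ∀ i a b,
      p i * (∫ ω in {ω | z ω = i}, R1 ω a * R2 ω b ∂μ) =
        (∫ ω in {ω | z ω = i}, R1 ω a ∂μ) * (∫ ω in {ω | z ω = i}, R2 ω b ∂μ))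
    (hCI13 : ∀ i a c,
      p i * (∫ ω in {ω | z ω = i}, R1 ω a * R3 ω c ∂μ) =
        (∫ ω in {ω | z ω = i}, R1 ω a ∂μ) * (∫ ω in {ω | z ω = i}, R3 ω c ∂μ))
    (hCI23 : ∀ i b c,
      p i * (∫ ω in {ω | z ω = i}, R2 ω b * R3 ω c ∂μ) =
        (∫ ω in {ω | z ω = i}, R2 ω b ∂μ) * (∫ ω in {ω | z ω = i}, R3 ω c ∂μ))
    -- the cross-moment matrices A13 = E[R¹⊗R³], A23 = E[R²⊗R³]:
    (A13 : Matrix (Fin J1) (Fin J3) ℝ)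
    (hA13 : ∀ a c, A13 a c = ∫ ω, R1 ω a * R3 ω c ∂μ)
    (A23 : Matrix (Fin J2) (Fin J3) ℝ)
    (hA23 : ∀ b c, A23 b c = ∫ ω, R2 ω b * R3 ω c ∂μ)
    -- Pinv is the Moore–Penrose pseudoinverse of A23:
    (Pinv : Matrix (Fin J3) (Fin J2) ℝ)
    (hMP1 : A23 * Pinv * A23 = A23)
    (hMP2 : Pinv * A23 * Pinv = Pinv)
    (hMP3 : (A23 * Pinv).transpose = A23 * Pinv)
    (hMP4 : (Pinv * A23).transpose = Pinv * A23)
    -- the transformed response R²′ = (A13 · Pinv) R²: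
    (R2' : Ω → Fin J1 → ℝ)
    (hR2' : ∀ ω a, R2' ω a = ∑ b, (A13 * Pinv) a b * R2 ω b) :
    (∀ i a, (∫ ω in {ω | z ω = i}, R2' ω a ∂μ) = p i * θ1 a i) ∧
      (∀ a a', (∫ ω, R1 ω a * R2' ω a' ∂μ) = ∑ i, p i * θ1 a i * θ1 a' i) := by
  have hp0 : ∀ i, p i ≠ 0 := fun i => (hppos i).ne'
  have hmoment13 : A13 = θ1 * (Matrix.diagonal p * θ3.transpose) := by
    ext a c
    rw [hA13, integral_mul_eq_sum_of_class_means hz (hint13 a c) hp0 (fun i => hmean1 i a)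
      (fun i => hmean3 i c) fun i => hCI13 i a c]
    rw [Matrix.mul_apply]
    exact Finset.sum_congr rfl fun i _ => by
      rw [Matrix.diagonal_mul, Matrix.transpose_apply]; ring
  have hmoment23 : A23 = θ2 * (Matrix.diagonal p * θ3.transpose) := by
    ext b c
    rw [hA23, integral_mul_eq_sum_of_class_means hz (hint23 b c) hp0 (fun i => hmean2 i b)
      (fun i => hmean3 i c) fun i => hCI23 i b c]
    rw [Matrix.mul_apply]
    exact Finset.sum_congr rfl fun i _ => by
      rw [Matrix.diagonal_mul, Matrix.transpose_apply]; ring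
  obtain ⟨B2, hB2⟩ := exists_mul_eq_one_of_linearIndependent_transpose hrank2
  obtain ⟨B3, hB3⟩ := exists_mul_eq_one_of_linearIndependent_transpose hrank3
  have hright : Matrix.diagonal p * θ3.transpose *
      (B3.transpose * Matrix.diagonal fun i => (p i)⁻¹) = 1 := by
    rw [Matrix.mul_assoc, ← Matrix.mul_assoc θ3.transpose, ← Matrix.transpose_mul, hB3,
      Matrix.transpose_one, Matrix.one_mul, Matrix.diagonal_mul_diagonal]
    simp [hp0]
  have htransform : A13 * Pinv * θ2 = θ1 := by
    rw [hmoment13, Matrix.mul_assoc, Matrix.mul_assoc θ1, ← Matrix.mul_assoc _ Pinv,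
      mul_generalizedInverse_mul_eq_one hB2 hright (hmoment23 ▸ hMP1), Matrix.mul_one]
  have happly : ∀ a i, ∑ b, (A13 * Pinv) a b * θ2 b i = θ1 a i := fun a i => by
    rw [← Matrix.mul_apply, htransform]
  refine ⟨fun i a => ?_, fun a a' => ?_⟩
  · simp_rw [hR2']
    rw [integral_finsetSum _ fun b _ => ((hint2 b).const_mul _).integrableOn, ← happly,
      Finset.mul_sum]
    refine Finset.sum_congr rfl fun b _ => ?_
    rw [integral_const_mul, hmean2]
    ring
  · simp_rw [hR2', Finset.mul_sum, mul_left_comm (R1 _ a)]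
    rw [integral_finsetSum _ fun b _ => (hint12 a b).const_mul _]
    simp_rw [integral_const_mul, integral_mul_eq_sum_of_class_means hz (hint12 a _) hp0
      (fun i => hmean1 i a) (fun i => hmean2 i _) (fun i => hCI12 i a _), ← happly a',
      Finset.mul_sum]
    rw [Finset.sum_comm]
    exact Finset.sum_congr rfl fun i _ => Finset.sum_congr rfl fun b _ => by ring
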